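/- Let x : [0,1] → ℝ be a continuous function with Faber–Schauder coefficients θ_{m,k} and s_n := (Σ_{m=0}^{n−1} Σ_{k=0}^{2^m−1} θ_{m,k}²)^{1/2}. If sup_{n∈ℕ} s_n < ∞, then x has bounded variation on [0,1]. -/

import Mathlib

/-!
Write `d_{n,k} = x((k+1)/2^n) - x(k/2^n)` and `Q_n = 2^n ∑_{k<2^n} d_{n,k}²`. Splitting a dyadic
interval at its midpoint writes `d_{n,k}` as a sum `a + b` of two increments of level `n+1`, while
`a - b = 2^{-n/2} θ_{n,k}`. The parallelogram identity `2(a² + b²) = (a+b)² + (a-b)²` then gives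
`Q_{n+1} = Q_n + ∑_k θ_{n,k}²` (`dyadicEnergy_succ`), so `Q_n = (x(1) - x(0))² + s_n²` is bounded.

By Cauchy–Schwarz the variation of `x` along the `n`-th dyadic grid is at most `√Q_n`. The step
functions `t ↦ x(⌊2^n t⌋/2^n)` have at most this variation and converge pointwise to `x` by
continuity, so lower semicontinuity of the total variation bounds the variation of `x`.
-/

open Filter Finset

noncomputable section

/-- Faber–Schauder coefficient `θ_{m,k}` of `x`. -/
def fsCoeff (x : ℝ → ℝ) (m k : ℕ) : ℝ :=
  2 ^ ((m : ℝ) / 2) *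
    (2 * x ((2 * (k : ℝ) + 1) / 2 ^ (m + 1)) - x ((k : ℝ) / 2 ^ m) - x (((k : ℝ) + 1) / 2 ^ m))

/-- `s_n = (∑_{m<n} ∑_{k<2^m} θ_{m,k}²)^{1/2}`. -/
def sSeq (x : ℝ → ℝ) (n : ℕ) : ℝ :=
  Real.sqrt (∑ m ∈ Finset.range n, ∑ k ∈ Finset.range (2 ^ m), fsCoeff x m k ^ 2)

/-- The dyadic energy `Q_n = 2^n ∑_{k<2^n} (x((k+1)/2^n) - x(k/2^n))²`. -/
def dyadicEnergy (x : ℝ → ℝ) (n : ℕ) : ℝ :=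
  2 ^ n * ∑ k ∈ Finset.range (2 ^ n),
    (x (((k + 1 : ℕ) : ℝ) / 2 ^ n) - x ((k : ℝ) / 2 ^ n)) ^ 2

lemma sum_range_two_mul_pairs (f : ℕ → ℝ) (N : ℕ) :
    ∑ k ∈ Finset.range (2 * N), f k = ∑ k ∈ Finset.range N, (f (2 * k) + f (2 * k + 1)) := by
  induction N with
  | zero => simp
  | succ N ih =>
    rw [show 2 * (N + 1) = 2 * N + 1 + 1 by ring, Finset.sum_range_succ, Finset.sum_range_succ,
      Finset.sum_range_succ, ih]
    ring

lemma fsCoeff_sq (x : ℝ → ℝ) (m k : ℕ) :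
    fsCoeff x m k ^ 2 = 2 ^ m * (2 * x ((2 * (k : ℝ) + 1) / 2 ^ (m + 1)) - x ((k : ℝ) / 2 ^ m)
      - x (((k : ℝ) + 1) / 2 ^ m)) ^ 2 := by
  have h : ((2 : ℝ) ^ ((m : ℝ) / 2)) ^ 2 = 2 ^ m := by
    rw [← Real.rpow_natCast, ← Real.rpow_mul (by norm_num)]
    simp
  rw [fsCoeff, mul_pow, h]

/-- Refining the dyadic grid increases the energy by the squared coefficients of that level: the
parallelogram identity on each dyadic interval. -/
lemma dyadicEnergy_succ (x : ℝ → ℝ) (n : ℕ) :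
    dyadicEnergy x (n + 1) =
      dyadicEnergy x n + ∑ k ∈ Finset.range (2 ^ n), fsCoeff x n k ^ 2 := by
  unfold dyadicEnergy
  rw [show (2 : ℕ) ^ (n + 1) = 2 * 2 ^ n by ring, sum_range_two_mul_pairs, Finset.mul_sum,
    Finset.mul_sum, ← Finset.sum_add_distrib]
  refine Finset.sum_congr rfl fun k _ => ?_
  rw [fsCoeff_sq]
  have h0 : ((2 * k : ℕ) : ℝ) / 2 ^ (n + 1) = (k : ℝ) / 2 ^ n := by
    push_cast
    field_simp
    ring
  have h1 : ((2 * k + 1 : ℕ) : ℝ) / 2 ^ (n + 1) = (2 * (k : ℝ) + 1) / 2 ^ (n + 1) := by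
    push_cast
    rfl
  have h2 : ((2 * k + 1 + 1 : ℕ) : ℝ) / 2 ^ (n + 1) = ((k : ℝ) + 1) / 2 ^ n := by
    push_cast
    field_simp
    ring
  rw [h0, h1, h2]
  push_cast
  ring

lemma dyadicEnergy_eq (x : ℝ → ℝ) (n : ℕ) :
    dyadicEnergy x n = (x 1 - x 0) ^ 2 + sSeq x n ^ 2 := by
  have hs : sSeq x n ^ 2 =
      ∑ m ∈ Finset.range n, ∑ k ∈ Finset.range (2 ^ m), fsCoeff x m k ^ 2 :=
    Real.sq_sqrt (by positivity)
  rw [hs]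
  clear hs
  induction n with
  | zero => simp [dyadicEnergy]
  | succ n ih => rw [dyadicEnergy_succ, ih, Finset.sum_range_succ, add_assoc]

/-- Cauchy–Schwarz for the variation along the `n`-th dyadic grid. -/
lemma sum_abs_le_sqrt_dyadicEnergy (x : ℝ → ℝ) (n : ℕ) :
    ∑ k ∈ Finset.range (2 ^ n), |x (((k + 1 : ℕ) : ℝ) / 2 ^ n) - x ((k : ℝ) / 2 ^ n)|
      ≤ √(dyadicEnergy x n) := by
  apply Real.le_sqrt_of_sq_le
  refine sq_sum_le_card_mul_sum_sq.trans (le_of_eq ?_)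
  simp [dyadicEnergy, sq_abs]

lemma eVariationOn_nat_pair (g : ℕ → ℝ) (i : ℕ) :
    eVariationOn g (Set.Icc i (i + 1)) = edist (g (i + 1)) (g i) := by
  rw [show Set.Icc i (i + 1) = {i} ∪ {i + 1} by ext j; simp; omega,
    eVariationOn.union' g (isGreatest_singleton) (isLeast_singleton) (Nat.le_succ i)]
  simp [edist_comm]

lemma eVariationOn_nat_Icc (g : ℕ → ℝ) (N : ℕ) :
    eVariationOn g (Set.Icc 0 N) = ENNReal.ofReal (∑ k ∈ Finset.range N, |g (k + 1) - g k|) := by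
  rw [ENNReal.ofReal_sum_of_nonneg fun _ _ => abs_nonneg _]
  refine (eVariationOn.sum' g (I := id) monotone_id (n := N)).symm.trans ?_
  refine Finset.sum_congr rfl fun k _ => ?_
  rw [id, id, eVariationOn_nat_pair, edist_dist, Real.dist_eq]

/-- The step function sampling `x` at the left dyadic point varies no more than `x` does along the
dyadic grid. -/
lemma eVariationOn_step_le (x : ℝ → ℝ) (n : ℕ) :
    eVariationOn (fun t : ℝ => x ((⌊t * 2 ^ n⌋₊ : ℝ) / 2 ^ n)) (Set.Icc 0 1) ≤
      ENNReal.ofReal √(dyadicEnergy x n) := by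
  refine (eVariationOn.comp_le_of_monotoneOn (fun k : ℕ => x ((k : ℝ) / 2 ^ n))
    (s := Set.Icc 0 (2 ^ n)) (fun t : ℝ => ⌊t * 2 ^ n⌋₊) ?_ ?_).trans ?_
  · intro s _ t _ hst
    exact Nat.floor_mono (by gcongr)
  · intro t ht
    refine ⟨Nat.zero_le _, Nat.floor_le_of_le ?_⟩
    push_cast
    exact mul_le_of_le_one_left (by positivity) ht.2
  · rw [eVariationOn_nat_Icc]
    exact ENNReal.ofReal_le_ofReal (sum_abs_le_sqrt_dyadicEnergy x n)

lemma tendsto_step (x : ℝ → ℝ) (hx : ContinuousOn x (Set.Icc 0 1)) (t : ℝ)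
    (ht : t ∈ Set.Icc (0 : ℝ) 1) :
    Tendsto (fun n : ℕ => x ((⌊t * 2 ^ n⌋₊ : ℝ) / 2 ^ n)) atTop (nhds (x t)) := by
  refine (hx t ht).tendsto.comp (tendsto_nhdsWithin_iff.2 ⟨?_, .of_forall fun n => ?_⟩)
  · exact (tendsto_nat_floor_mul_div_atTop ht.1).comp
      (tendsto_pow_atTop_atTop_of_one_lt (one_lt_two : (1 : ℝ) < 2))
  · have h : (⌊t * 2 ^ n⌋₊ : ℝ) ≤ t * 2 ^ n :=
      Nat.floor_le (mul_nonneg ht.1 (by positivity))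
    refine ⟨by positivity, ?_⟩
    rw [div_le_one (by positivity)]
    exact h.trans (mul_le_of_le_one_left (by positivity) ht.2)

theorem stmt9 (x : ℝ → ℝ) (hx : ContinuousOn x (Set.Icc 0 1))
    (hs : BddAbove (Set.range (sSeq x))) :
    BoundedVariationOn x (Set.Icc 0 1) := by
  obtain ⟨M, hM⟩ := hs
  intro htop
  have hlt : ENNReal.ofReal √((x 1 - x 0) ^ 2 + M ^ 2) < eVariationOn x (Set.Icc 0 1) := by
    rw [htop]
    exact ENNReal.ofReal_lt_top
  obtain ⟨n, hn⟩ :=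
    (eVariationOn.lowerSemicontinuous_aux (fun t ht => tendsto_step x hx t ht) hlt).exists
  refine absurd (hn.trans_le (eVariationOn_step_le x n)) (not_lt.2 ?_)
  rw [dyadicEnergy_eq]
  have h0 : 0 ≤ sSeq x n := Real.sqrt_nonneg _
  have h1 : sSeq x n ≤ M := hM ⟨n, rfl⟩
  gcongr
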